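/- Let F be a field of characteristic p > 0, let ℓ be a positive divisor of p − 1, set m = (p − 1)/ℓ, and let a, b ∈ F \ {0}. Let g = x(x^ℓ − a)^m and h = x(x^ℓ − b)^m. Then g ∘ h = x(x^{ℓ(p+1)} − (b^p + a)x^ℓ + ab)^m, and there exist ε ∈ {0, 1} and u, s, t ∈ F \ {0} such that t^{p+1} − ε·u·t + u = 0, b = s·t, a = u·s^p·t^{−1}, and consequently g ∘ h = x(x^{ℓ(p+1)} − ε·u·s^p·x^ℓ + u·s^{p+1})^m. -/

import Mathlib

open Polynomial

/-!
Put `Y = X ^ ℓ`. Since `m * ℓ = p - 1`, one has `h ^ ℓ = Y * (Y - b) ^ (p - 1)`, so multiplying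
`h ^ ℓ - a` by `Y - b` produces `Y * (Y - b) ^ p - a * (Y - b)`, which the Frobenius identity
`(Y - b) ^ p = Y ^ p - b ^ p` turns into `Y ^ (p + 1) - (b ^ p + a) * Y + a * b`. The composition
is `h * (h ^ ℓ - a) ^ m = X * ((Y - b) * (h ^ ℓ - a)) ^ m`, whence the first formula.

For the parameters, one solves `ε * u * s ^ p = b ^ p + a` and `u * s ^ (p + 1) = a * b` together
with `b = s * t`. If `b ^ p + a = 0`, take `ε = 0`, `s = 1`, `t = b`, `u = a * b`. Otherwise
`ε = 1` and the solution is unique.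
-/

theorem parametrization_of_case_one
    {F : Type*} [Field F] (p : ℕ) [Fact p.Prime] [CharP F p]
    (ℓ m : ℕ) (hℓpos : 0 < ℓ) (hℓdvd : ℓ ∣ p - 1) (hm : m = (p - 1) / ℓ)
    (a b : F) (ha : a ≠ 0) (hb : b ≠ 0)
    (g h : F[X])
    (hg : g = X * (X ^ ℓ - C a) ^ m) (hh : h = X * (X ^ ℓ - C b) ^ m) :
    g.comp h =
      X * (X ^ (ℓ * (p + 1)) - C (b ^ p + a) * X ^ ℓ + C (a * b)) ^ m ∧
    ∃ ε u s t : F, (ε = 0 ∨ ε = 1) ∧ u ≠ 0 ∧ s ≠ 0 ∧ t ≠ 0 ∧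
      t ^ (p + 1) - ε * u * t + u = 0 ∧ b = s * t ∧ a = u * s ^ p * t⁻¹ ∧
      g.comp h =
        X * (X ^ (ℓ * (p + 1)) - C (ε * u * s ^ p) * X ^ ℓ +
          C (u * s ^ (p + 1))) ^ m := by
  have hp : p - 1 + 1 = p := Nat.sub_add_cancel (Fact.out : p.Prime).one_le
  have hmℓ : m * ℓ = p - 1 := by rw [hm]; exact Nat.div_mul_cancel hℓdvd
  have hpow : h ^ ℓ = X ^ ℓ * (X ^ ℓ - C b) ^ (p - 1) := by
    rw [hh, mul_pow, ← pow_mul, hmℓ]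
  have hfrob : (X ^ ℓ - C b : F[X]) ^ p = (X ^ ℓ) ^ p - C b ^ p := sub_pow_char _ _
  have hkey : (X ^ ℓ - C b) * (h ^ ℓ - C a) =
      X ^ (ℓ * (p + 1)) - C (b ^ p + a) * X ^ ℓ + C (a * b) := by
    calc (X ^ ℓ - C b) * (h ^ ℓ - C a)
        = X ^ ℓ * (X ^ ℓ - C b) ^ (p - 1 + 1) - C a * (X ^ ℓ - C b) := by
          rw [hpow]; ring
      _ = _ := by
          rw [hp, hfrob, pow_mul]
          simp only [C_add, C_mul, C_pow]
          ring
  have hcomp : g.comp h =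
      X * (X ^ (ℓ * (p + 1)) - C (b ^ p + a) * X ^ ℓ + C (a * b)) ^ m := by
    have hgh : g.comp h = h * (h ^ ℓ - C a) ^ m := by rw [hg]; simp
    rw [hgh, ← hkey, mul_pow, ← mul_assoc, ← hh]
  refine ⟨hcomp, ?_⟩
  by_cases hc : b ^ p + a = 0
  · refine ⟨0, a * b, 1, b, Or.inl rfl, mul_ne_zero ha hb, one_ne_zero, hb, ?_, ?_, ?_, ?_⟩
    · linear_combination b * hc
    · ring
    · field_simp
      simp
    · rw [hcomp, hc]; simp
  · have hs : a * b / (b ^ p + a) ≠ 0 := div_ne_zero (mul_ne_zero ha hb) hc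
    obtain ⟨s, hsdef⟩ : ∃ s, s = a * b / (b ^ p + a) := ⟨_, rfl⟩
    rw [← hsdef] at hs
    have hsc : s * (b ^ p + a) = a * b := by rw [hsdef]; field_simp
    have hsp : s ^ p ≠ 0 := pow_ne_zero p hs
    have hbst : b = s * ((b ^ p + a) / a) := by
      field_simp; linear_combination -hsc
    have hus : (b ^ p + a) / s ^ p * s ^ p = b ^ p + a := div_mul_cancel₀ _ hsp
    have htp : ((b ^ p + a) / a) ^ p = b ^ p / s ^ p := by
      rw [eq_div_iff hsp, ← mul_pow, mul_comm, ← hbst]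
    refine ⟨1, (b ^ p + a) / s ^ p, s, (b ^ p + a) / a, Or.inr rfl, div_ne_zero hc hsp, hs,
      div_ne_zero hc ha, ?_, hbst, ?_, ?_⟩
    · rw [pow_succ, htp]
      field_simp
      ring
    · rw [hus]; field_simp
    · rw [hcomp, one_mul, pow_succ, ← mul_assoc, hus, mul_comm _ s, hsc]
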